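/- arXiv:1106.4662 — 2 statements merged into one kernel-verified Lean document; each statement's English description precedes it below -/
import Mathlib

section
/- Suppose that for every j ∈ {1,…,M} we have 2|(Z_n)_j| ≤ ŵ_j, and let β̂ be a minimizer over a convex set B ⊆ ℝ^M of the penalized criterion b ↦ R_n(b) + 2 pen(b). Let s ∈ {1,…,M} and suppose the restricted eigenvalue condition RE(s,3) holds: there is κ > 0 such that for every J ⊆ {1,…,M} with |J| ≤ s and every b ∈ ℝ^M, b ≠ 0, with |b_{J^∁}|_{1,ŵ} ≤ 3 |b_J|_{1,ŵ}, one has κ |b_J|_2 ≤ ‖h_b‖_n. Then for every β ∈ B with at most s nonzero coordinates, ‖h_{β̂} − h_0‖_n² ≤ ‖h_β − h_0‖_n² + (9/(4κ²)) Σ_{j ∈ J(β)} ŵ_j². -/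
/-!
Since `∑ᵢ (h(Xᵢ) - h̄_Y(t)) Yᵢ(t) = 0` at every time of `[0,1]`, the baseline `λ₀` and the centring of `h₀`
drop out of the noise vector (`noiseZ_eq`), so that, up to the constant `‖h₀‖ₙ²`,
`Rₙ(b) = ‖h_b - h₀‖ₙ² - 2 ⟨Zₙ, b⟩` (`riskRn_eq`). Comparing `β̂` with the points of the segment
`[β̂, β]` and letting them tend to `β̂` gives, by convexity of the penalty and the parallelogram-type
expansion of the square, with `Δ = β̂ - β`,
`‖h_β̂ - h₀‖ₙ² + ‖h_Δ‖ₙ² ≤ ‖h_β - h₀‖ₙ² + 2 ⟨Zₙ, Δ⟩ + 2 (pen β - pen β̂)`.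
On the noise event the last two terms are at most `3 pen(Δ_J) - pen(Δ_{Jᶜ})` with `J = J(β)`
(`noise_pen_le`). Either this is negative, or `Δ` lies in the cone of the restricted eigenvalue
condition; then `3 pen(Δ_J) ≤ (3/κ) (∑_J ŵⱼ²)^{1/2} ‖h_Δ‖ₙ`, and `‖h_Δ‖ₙ²` on the left absorbs it
through `2ab ≤ a² + b²`.
-/

open MeasureTheory Finset

/-- Empirical mean of `h` over the at-risk individuals at time `t`:
`h̄_Y(t) = (∑ᵢ h(Xᵢ) Yᵢ(t)) / (∑ᵢ Yᵢ(t))`. -/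
noncomputable def hbar {n d : ℕ} (X : Fin n → (Fin d → ℝ)) (Y : Fin n → ℝ → ℝ)
    (h : (Fin d → ℝ) → ℝ) (t : ℝ) : ℝ :=
  (∑ i, h (X i) * Y i t) / (∑ i, Y i t)

/-- Empirical inner product `⟨g, h⟩ₙ`. -/
noncomputable def empInner {n d : ℕ} (X : Fin n → (Fin d → ℝ)) (Y : Fin n → ℝ → ℝ)
    (g h : (Fin d → ℝ) → ℝ) : ℝ :=
  (1 / (n : ℝ)) * ∑ i, ∫ t in (0:ℝ)..1,
    (g (X i) - hbar X Y g t) * (h (X i) - hbar X Y h t) * Y i t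

/-- Empirical squared norm `‖h‖ₙ²`. -/
noncomputable def empNormSq {n d : ℕ} (X : Fin n → (Fin d → ℝ)) (Y : Fin n → ℝ → ℝ)
    (h : (Fin d → ℝ) → ℝ) : ℝ := empInner X Y h h

/-- The linear combination `h_β = ∑ⱼ βⱼ hⱼ` over the dictionary. -/
noncomputable def hlin {M d : ℕ} (hdic : Fin M → (Fin d → ℝ) → ℝ) (β : Fin M → ℝ) :
    (Fin d → ℝ) → ℝ := fun x => ∑ j, β j * hdic j x

/-- The least-squares risk `Rₙ(β)`. -/
noncomputable def riskRn {n M d : ℕ} (X : Fin n → (Fin d → ℝ)) (Y : Fin n → ℝ → ℝ)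
    (N : Fin n → Measure ℝ) (hdic : Fin M → (Fin d → ℝ) → ℝ) (β : Fin M → ℝ) : ℝ :=
  (1 / (n : ℝ)) * ∑ i, ∫ t in (0:ℝ)..1,
      (hlin hdic β (X i) - ∑ j, β j * hbar X Y (hdic j) t) ^ 2 * Y i t
  - (2 / (n : ℝ)) * ∑ i, ∫ t in Set.Icc (0:ℝ) 1,
      (hlin hdic β (X i) - ∑ j, β j * hbar X Y (hdic j) t) ∂(N i)

/-- The noise vector `(Zₙ)ⱼ`. -/
noncomputable def noiseZ {n M d : ℕ} (X : Fin n → (Fin d → ℝ)) (Y : Fin n → ℝ → ℝ)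
    (N : Fin n → Measure ℝ) (hdic : Fin M → (Fin d → ℝ) → ℝ)
    (lam0 : ℝ → ℝ) (h0 : (Fin d → ℝ) → ℝ) (j : Fin M) : ℝ :=
  (1 / (n : ℝ)) * ∑ i,
    ((∫ t in Set.Icc (0:ℝ) 1, (hdic j (X i) - hbar X Y (hdic j) t) ∂(N i)) -
      ∫ t in (0:ℝ)..1, (hdic j (X i) - hbar X Y (hdic j) t) * (lam0 t + h0 (X i)) * Y i t)

/-- Weighted ℓ¹-penalty `pen(b) = ∑ⱼ ŵⱼ |bⱼ|`. -/
noncomputable def penW {M : ℕ} (w b : Fin M → ℝ) : ℝ := ∑ j, w j * |b j|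

/-- Support of a vector, `J(β) = {j : βⱼ ≠ 0}`. -/
noncomputable def suppJ {M : ℕ} (β : Fin M → ℝ) : Finset (Fin M) :=
  Finset.univ.filter (fun j => β j ≠ 0)

/-- Restriction of a vector to a set of coordinates: `(b_J)ⱼ = bⱼ` if `j ∈ J`, else `0`. -/
noncomputable def restr {M : ℕ} (J : Finset (Fin M)) (b : Fin M → ℝ) : Fin M → ℝ :=
  fun j => if j ∈ J then b j else 0

/-! ### Centred values and the empirical inner product -/

section Empirical

variable {n M d : ℕ} {X : Fin n → (Fin d → ℝ)} {Y : Fin n → ℝ → ℝ}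

lemma hbar_lin (a b : ℝ) (g h : (Fin d → ℝ) → ℝ) (t : ℝ) :
    hbar X Y (fun x => a * g x + b * h x) t = a * hbar X Y g t + b * hbar X Y h t := by
  unfold hbar
  rw [← mul_div_assoc, ← mul_div_assoc, ← add_div, Finset.mul_sum, Finset.mul_sum,
    ← Finset.sum_add_distrib]
  congr 1
  exact Finset.sum_congr rfl fun i _ => by ring

lemma hbar_hlin (hdic : Fin M → (Fin d → ℝ) → ℝ) (β : Fin M → ℝ) (t : ℝ) :
    hbar X Y (hlin hdic β) t = ∑ j, β j * hbar X Y (hdic j) t := by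
  unfold hbar hlin
  simp_rw [← mul_div_assoc]
  rw [← Finset.sum_div]
  congr 1
  simp_rw [Finset.sum_mul, Finset.mul_sum]
  rw [Finset.sum_comm]
  exact Finset.sum_congr rfl fun i _ => Finset.sum_congr rfl fun j _ => by ring

/-- The centred value `h(Xᵢ) - h̄_Y(t)`. -/
noncomputable def cent (X : Fin n → (Fin d → ℝ)) (Y : Fin n → ℝ → ℝ) (h : (Fin d → ℝ) → ℝ) (i : Fin n) (t : ℝ) :
    ℝ := h (X i) - hbar X Y h t

lemma cent_lin (a b : ℝ) (g h : (Fin d → ℝ) → ℝ) (i : Fin n) (t : ℝ) :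
    cent X Y (fun x => a * g x + b * h x) i t = a * cent X Y g i t + b * cent X Y h i t := by
  unfold cent
  rw [hbar_lin]
  ring

lemma cent_hlin (hdic : Fin M → (Fin d → ℝ) → ℝ) (β : Fin M → ℝ) (i : Fin n) (t : ℝ) :
    cent X Y (hlin hdic β) i t = ∑ j, β j * cent X Y (hdic j) i t := by
  unfold cent
  rw [hbar_hlin]
  simp only [hlin, mul_sub, Finset.sum_sub_distrib]

lemma cent_measurable (hYmeas : ∀ i, Measurable (Y i)) (h : (Fin d → ℝ) → ℝ) (i : Fin n) :
    Measurable (cent X Y h i) := by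
  unfold cent hbar
  fun_prop

/-- The bound also holds where all `Yᵢ(t)` vanish, since then `h̄_Y(t) = 0` by the convention
`0 / 0 = 0`. -/
lemma cent_bound (hYrange : ∀ i t, Y i t ∈ Set.Icc (0:ℝ) 1) (h : (Fin d → ℝ) → ℝ) (i : Fin n)
    (t : ℝ) : ‖cent X Y h i t‖ ≤ |h (X i)| + ∑ k, |h (X k)| := by
  have h1 : |hbar X Y h t| ≤ ∑ k, |h (X k)| := by
    unfold hbar
    rw [abs_div, abs_of_nonneg (Finset.sum_nonneg fun k _ => (hYrange k t).1)]
    apply div_le_of_le_mul₀ (Finset.sum_nonneg fun k _ => (hYrange k t).1)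
      (Finset.sum_nonneg fun k _ => abs_nonneg _)
    refine (Finset.abs_sum_le_sum_abs _ _).trans ?_
    rw [Finset.sum_mul]
    refine Finset.sum_le_sum fun k _ => ?_
    rw [abs_mul, abs_of_nonneg (hYrange k t).1]
    exact mul_le_mul_of_nonneg_left
      (Finset.single_le_sum (f := fun k => Y k t) (fun k _ => (hYrange k t).1) (Finset.mem_univ k))
      (abs_nonneg _)
  unfold cent
  rw [Real.norm_eq_abs]
  exact (abs_sub _ _).trans (by linarith)

lemma cent_integrable (hYmeas : ∀ i, Measurable (Y i))
    (hYrange : ∀ i t, Y i t ∈ Set.Icc (0:ℝ) 1) (h : (Fin d → ℝ) → ℝ) (i : Fin n)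
    (μ : Measure ℝ) [IsFiniteMeasure μ] : Integrable (cent X Y h i) μ :=
  Integrable.of_bound (cent_measurable hYmeas h i).aestronglyMeasurable _
    (Filter.Eventually.of_forall fun t => cent_bound hYrange h i t)

/-- Multiplication by `h(Xᵢ) - h̄_Y` and by `Yᵢ` preserves integrability, both being bounded. -/
lemma cent_mul_integrable (hYmeas : ∀ i, Measurable (Y i))
    (hYrange : ∀ i t, Y i t ∈ Set.Icc (0:ℝ) 1) (h : (Fin d → ℝ) → ℝ) (i : Fin n)
    {f : ℝ → ℝ} (hf : IntervalIntegrable f volume 0 1) :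
    IntervalIntegrable (fun t => cent X Y h i t * f t * Y i t) volume 0 1 := by
  rw [intervalIntegrable_iff] at hf ⊢
  have h1 : Integrable (fun t => cent X Y h i t * f t) (volume.restrict (Set.uIoc 0 1)) :=
    Integrable.bdd_mul hf (cent_measurable hYmeas h i).aestronglyMeasurable
      (Filter.Eventually.of_forall fun t => cent_bound hYrange h i t)
  refine Integrable.mul_bdd (c := 1) h1 (hYmeas i).aestronglyMeasurable
    (Filter.Eventually.of_forall fun t => ?_)
  rw [Real.norm_eq_abs, abs_of_nonneg (hYrange i t).1]
  exact (hYrange i t).2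

lemma cent_cent_integrable (hYmeas : ∀ i, Measurable (Y i))
    (hYrange : ∀ i t, Y i t ∈ Set.Icc (0:ℝ) 1) (g h : (Fin d → ℝ) → ℝ) (i : Fin n) :
    IntervalIntegrable (fun t => cent X Y g i t * cent X Y h i t * Y i t) volume 0 1 := by
  refine cent_mul_integrable hYmeas hYrange g i ?_
  rw [intervalIntegrable_iff, Set.uIoc_of_le zero_le_one]
  exact cent_integrable hYmeas hYrange h i (volume.restrict (Set.Ioc 0 1))

lemma empInner_eq (g h : (Fin d → ℝ) → ℝ) : empInner X Y g h =
    (1 / (n : ℝ)) * ∑ i, ∫ t in (0:ℝ)..1, cent X Y g i t * cent X Y h i t * Y i t := rfl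

lemma empInner_comm (g h : (Fin d → ℝ) → ℝ) : empInner X Y g h = empInner X Y h g := by
  simp only [empInner_eq]
  simp only [mul_comm (cent X Y g _ _)]

lemma empNormSq_nonneg (hYrange : ∀ i t, Y i t ∈ Set.Icc (0:ℝ) 1) (h : (Fin d → ℝ) → ℝ) :
    0 ≤ empNormSq X Y h := by
  unfold empNormSq
  rw [empInner_eq]
  refine mul_nonneg (by positivity) (Finset.sum_nonneg fun i _ => ?_)
  exact intervalIntegral.integral_nonneg (by norm_num) fun t _ =>
    mul_nonneg (mul_self_nonneg _) (hYrange i t).1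

lemma empInner_lin (hYmeas : ∀ i, Measurable (Y i))
    (hYrange : ∀ i t, Y i t ∈ Set.Icc (0:ℝ) 1) (a b : ℝ) (g h k : (Fin d → ℝ) → ℝ) :
    empInner X Y (fun x => a * g x + b * h x) k
      = a * empInner X Y g k + b * empInner X Y h k := by
  simp only [empInner_eq]
  have : ∀ i, ∫ t in (0:ℝ)..1, cent X Y (fun x => a * g x + b * h x) i t * cent X Y k i t * Y i t
      = a * (∫ t in (0:ℝ)..1, cent X Y g i t * cent X Y k i t * Y i t)
        + b * ∫ t in (0:ℝ)..1, cent X Y h i t * cent X Y k i t * Y i t := by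
    intro i
    rw [← intervalIntegral.integral_const_mul, ← intervalIntegral.integral_const_mul,
      ← intervalIntegral.integral_add
        ((cent_cent_integrable hYmeas hYrange g k i).const_mul a)
        ((cent_cent_integrable hYmeas hYrange h k i).const_mul b)]
    congr 1
    funext t
    rw [cent_lin]
    ring
  simp only [this, Finset.sum_add_distrib, ← Finset.mul_sum]
  ring

lemma empInner_hlin (hYmeas : ∀ i, Measurable (Y i))
    (hYrange : ∀ i t, Y i t ∈ Set.Icc (0:ℝ) 1) (hdic : Fin M → (Fin d → ℝ) → ℝ) (β : Fin M → ℝ)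
    (k : (Fin d → ℝ) → ℝ) :
    empInner X Y (hlin hdic β) k = ∑ j, β j * empInner X Y (hdic j) k := by
  simp only [empInner_eq]
  have : ∀ i, ∫ t in (0:ℝ)..1, cent X Y (hlin hdic β) i t * cent X Y k i t * Y i t
      = ∑ j, β j * ∫ t in (0:ℝ)..1, cent X Y (hdic j) i t * cent X Y k i t * Y i t := by
    intro i
    simp_rw [← intervalIntegral.integral_const_mul]
    rw [← intervalIntegral.integral_finsetSum fun j _ =>
        (cent_cent_integrable hYmeas hYrange (hdic j) k i).const_mul (β j)]
    congr 1
    funext t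
    rw [cent_hlin, Finset.sum_mul, Finset.sum_mul]
    exact Finset.sum_congr rfl fun j _ => by ring
  simp only [this]
  rw [Finset.sum_comm, Finset.mul_sum]
  refine Finset.sum_congr rfl fun j _ => ?_
  rw [← Finset.mul_sum]
  ring

/-- Expansion of the square of `g + a h`. -/
lemma empNormSq_add_smul (hYmeas : ∀ i, Measurable (Y i))
    (hYrange : ∀ i t, Y i t ∈ Set.Icc (0:ℝ) 1) (a : ℝ) (g h : (Fin d → ℝ) → ℝ) :
    empNormSq X Y (fun x => 1 * g x + a * h x)
      = empNormSq X Y g + 2 * a * empInner X Y g h + a ^ 2 * empNormSq X Y h := by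
  unfold empNormSq
  rw [empInner_lin hYmeas hYrange, empInner_comm g, empInner_comm h,
    empInner_lin hYmeas hYrange, empInner_lin hYmeas hYrange, empInner_comm h g]
  ring

/-! ### Noise vector and least-squares risk -/

/-- The centred values sum to zero against `Y`. -/
lemma sum_cent_mul (h : (Fin d → ℝ) → ℝ) (t : ℝ) (hpos : 0 < ∑ i, Y i t) :
    ∑ i, cent X Y h i t * Y i t = 0 := by
  simp only [cent, sub_mul, Finset.sum_sub_distrib, ← Finset.mul_sum]
  unfold hbar
  rw [div_mul_cancel₀ _ hpos.ne', sub_self]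

/-- The counting part `(1/n) ∑ᵢ ∫ (hⱼ(Xᵢ) - h̄ⱼ) dNᵢ` of the noise vector. -/
noncomputable def countPart (X : Fin n → (Fin d → ℝ)) (Y : Fin n → ℝ → ℝ)
    (N : Fin n → Measure ℝ) (h : (Fin d → ℝ) → ℝ) : ℝ :=
  (1 / (n : ℝ)) * ∑ i, ∫ t in Set.Icc (0:ℝ) 1, cent X Y h i t ∂(N i)

/-- The compensator of the counting part is `⟨h, h₀⟩ₙ`: the function `λ₀` and the mean of `h₀` do not
depend on `i` and are annihilated by the centring of `h`. -/
lemma compensator_eq (hYmeas : ∀ i, Measurable (Y i))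
    (hYrange : ∀ i t, Y i t ∈ Set.Icc (0:ℝ) 1)
    (hYpos : ∀ t ∈ Set.Icc (0:ℝ) 1, 0 < ∑ i, Y i t)
    (lam0 : ℝ → ℝ) (hlam_int : IntervalIntegrable lam0 volume 0 1) (h h0 : (Fin d → ℝ) → ℝ) :
    ∑ i, ∫ t in (0:ℝ)..1, cent X Y h i t * (lam0 t + h0 (X i)) * Y i t
      = ∑ i, ∫ t in (0:ℝ)..1, cent X Y h i t * cent X Y h0 i t * Y i t := by
  rw [← intervalIntegral.integral_finsetSum fun i _ =>
      cent_mul_integrable hYmeas hYrange h i (hlam_int.add intervalIntegrable_const),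
    ← intervalIntegral.integral_finsetSum fun i _ => cent_cent_integrable hYmeas hYrange h h0 i]
  refine intervalIntegral.integral_congr fun t ht => ?_
  rw [Set.uIcc_of_le zero_le_one] at ht
  have h1 := sum_cent_mul (X := X) h t (hYpos t ht)
  have h2 : ∑ i, cent X Y h i t * (lam0 t + h0 (X i)) * Y i t
      = ∑ i, cent X Y h i t * cent X Y h0 i t * Y i t
        + (lam0 t + hbar X Y h0 t) * ∑ i, cent X Y h i t * Y i t := by
    rw [Finset.mul_sum, ← Finset.sum_add_distrib]
    refine Finset.sum_congr rfl fun i _ => ?_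
    simp only [cent]
    ring
  simpa [h1] using h2

lemma noiseZ_eq (hYmeas : ∀ i, Measurable (Y i))
    (hYrange : ∀ i t, Y i t ∈ Set.Icc (0:ℝ) 1)
    (hYpos : ∀ t ∈ Set.Icc (0:ℝ) 1, 0 < ∑ i, Y i t) (N : Fin n → Measure ℝ)
    (hdic : Fin M → (Fin d → ℝ) → ℝ)
    (lam0 : ℝ → ℝ) (hlam_int : IntervalIntegrable lam0 volume 0 1) (h0 : (Fin d → ℝ) → ℝ)
    (j : Fin M) :
    noiseZ X Y N hdic lam0 h0 j = countPart X Y N (hdic j) - empInner X Y (hdic j) h0 := by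
  rw [empInner_eq, ← compensator_eq hYmeas hYrange hYpos lam0 hlam_int, countPart, ← mul_sub,
    ← Finset.sum_sub_distrib]
  rfl

/-- Up to a constant, the least-squares risk is the squared distance to `h₀` minus twice the noise.
In `riskRn` the counting term stands inside the sum over `i` and the time integral. It is constant
there, so averaging over the `n ≥ 1` individuals and over `[0,1]` leaves it unchanged. -/
lemma riskRn_eq (hn : 1 ≤ n) (hYmeas : ∀ i, Measurable (Y i))
    (hYrange : ∀ i t, Y i t ∈ Set.Icc (0:ℝ) 1)
    (hYpos : ∀ t ∈ Set.Icc (0:ℝ) 1, 0 < ∑ i, Y i t) (N : Fin n → Measure ℝ)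
    (hN : ∀ i, IsFiniteMeasure (N i)) (hdic : Fin M → (Fin d → ℝ) → ℝ)
    (lam0 : ℝ → ℝ) (hlam_int : IntervalIntegrable lam0 volume 0 1) (h0 : (Fin d → ℝ) → ℝ)
    (β : Fin M → ℝ) :
    riskRn X Y N hdic β = empNormSq X Y (fun x => hlin hdic β x - h0 x) - empNormSq X Y h0
      - 2 * ∑ j, noiseZ X Y N hdic lam0 h0 j * β j := by
  have hrisk : riskRn X Y N hdic β
      = empNormSq X Y (hlin hdic β) - 2 * ∑ j, β j * countPart X Y N (hdic j) := by
    have hint : ∀ i, ∫ t in Set.Icc (0:ℝ) 1, cent X Y (hlin hdic β) i t ∂(N i)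
        = ∑ j, β j * ∫ t in Set.Icc (0:ℝ) 1, cent X Y (hdic j) i t ∂(N i) := by
      intro i
      have := hN i
      simp_rw [← integral_const_mul]
      rw [← integral_finsetSum _ fun j _ =>
        (cent_integrable hYmeas hYrange (hdic j) i ((N i).restrict _)).const_mul (β j)]
      congr 1
      funext t
      exact cent_hlin hdic β i t
    have hsum : ∑ j, β j * countPart X Y N (hdic j)
        = (1 / (n : ℝ)) * ∑ i, ∫ t in Set.Icc (0:ℝ) 1, cent X Y (hlin hdic β) i t ∂(N i) := by
      simp only [hint, countPart]
      rw [Finset.sum_comm, Finset.mul_sum]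
      refine Finset.sum_congr rfl fun j _ => ?_
      rw [← Finset.mul_sum]
      ring
    have hconst : ∀ (c : ℝ) (i : Fin n),
        ∫ t in (0:ℝ)..1, (cent X Y (hlin hdic β) i t * cent X Y (hlin hdic β) i t * Y i t - c)
          = (∫ t in (0:ℝ)..1,
              cent X Y (hlin hdic β) i t * cent X Y (hlin hdic β) i t * Y i t) - c := by
      intro c i
      rw [intervalIntegral.integral_sub (cent_cent_integrable hYmeas hYrange _ _ i)
        intervalIntegrable_const]
      simp
    have hform : riskRn X Y N hdic β = (1 / (n : ℝ)) * ∑ i, ∫ t in (0:ℝ)..1,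
        (cent X Y (hlin hdic β) i t * cent X Y (hlin hdic β) i t * Y i t
          - (2 / (n : ℝ)) * ∑ k, ∫ t in Set.Icc (0:ℝ) 1, cent X Y (hlin hdic β) k t ∂(N k)) := by
      simp only [riskRn, ← hbar_hlin, pow_two, cent]
    have hn0 : (n : ℝ) ≠ 0 := by
      exact_mod_cast (Nat.one_le_iff_ne_zero.1 hn)
    rw [hform, hsum, empNormSq, empInner_eq]
    simp only [hconst, Finset.sum_sub_distrib, Finset.sum_const, Finset.card_univ,
      Fintype.card_fin, nsmul_eq_mul]
    field_simp
  have hsq := empNormSq_add_smul (X := X) hYmeas hYrange (-1) (hlin hdic β) h0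
  have hfun : (fun x => 1 * hlin hdic β x + -1 * h0 x) = fun x => hlin hdic β x - h0 x := by
    funext x
    ring
  rw [hfun, empInner_hlin hYmeas hYrange] at hsq
  have hZ : ∑ j, noiseZ X Y N hdic lam0 h0 j * β j
      = ∑ j, β j * countPart X Y N (hdic j) - ∑ j, β j * empInner X Y (hdic j) h0 := by
    rw [← Finset.sum_sub_distrib]
    refine Finset.sum_congr rfl fun j _ => ?_
    rw [noiseZ_eq hYmeas hYrange hYpos N hdic lam0 hlam_int]
    ring
  rw [hrisk, hsq, hZ]
  ring

end Empirical

/-! ### Weighted penalty and a first-order condition -/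

lemma penW_restr {M : ℕ} (w b : Fin M → ℝ) (J : Finset (Fin M)) :
    penW w (restr J b) = ∑ j ∈ J, w j * |b j| := by
  unfold penW restr
  rw [← Finset.sum_subset (Finset.subset_univ J) fun j _ hj => by simp [hj]]
  exact Finset.sum_congr rfl fun j hj => by simp [hj]

lemma penW_segment_le {M : ℕ} (w : Fin M → ℝ) (hw : ∀ j, 0 < w j) (a b : Fin M → ℝ) (t : ℝ)
    (ht0 : 0 ≤ t) (ht1 : t ≤ 1) :
    penW w ((1 - t) • a + t • b) ≤ (1 - t) * penW w a + t * penW w b := by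
  unfold penW
  rw [Finset.mul_sum, Finset.mul_sum, ← Finset.sum_add_distrib]
  refine Finset.sum_le_sum fun j _ => ?_
  have h1 : |(1 - t) * a j + t * b j| ≤ (1 - t) * |a j| + t * |b j| := by
    refine (abs_add_le _ _).trans ?_
    rw [abs_mul, abs_mul, abs_of_nonneg ht0, abs_of_nonneg (sub_nonneg.2 ht1)]
  have h2 := mul_le_mul_of_nonneg_left h1 (hw j).le
  simp only [Pi.add_apply, Pi.smul_apply, smul_eq_mul]
  linarith

/-- On the noise event, noise plus penalty difference is controlled by the cone functional. The
penalty difference contributes `2 ŵⱼ |Δⱼ|` on `J(β)` and, as `β` vanishes there, `-2 ŵⱼ |Δⱼ|` off it. -/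
lemma noise_pen_le {M : ℕ} (w z : Fin M → ℝ) (hw : ∀ j, 0 < w j) (hz : ∀ j, 2 * |z j| ≤ w j)
    (a β : Fin M → ℝ) :
    2 * ∑ j, z j * (a j - β j) + 2 * (penW w β - penW w a)
      ≤ 3 * penW w (restr (suppJ β) (a - β)) - penW w (restr (suppJ β)ᶜ (a - β)) := by
  rw [penW_restr, penW_restr]
  unfold penW
  have hsplit := Finset.sum_add_sum_compl (suppJ β)
    (fun j => 2 * (z j * (a j - β j)) + 2 * (w j * |β j| - w j * |a j|))
  have hL : 2 * ∑ j, z j * (a j - β j) + 2 * (∑ j, w j * |β j| - ∑ j, w j * |a j|)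
      = ∑ j, (2 * (z j * (a j - β j)) + 2 * (w j * |β j| - w j * |a j|)) := by
    rw [Finset.sum_add_distrib, ← Finset.mul_sum, ← Finset.mul_sum, Finset.sum_sub_distrib]
  have hnoise : ∀ j, 2 * (z j * (a j - β j)) ≤ w j * |a j - β j| := fun j => by
    have h1 : z j * (a j - β j) ≤ |z j| * |a j - β j| := by
      rw [← abs_mul]
      exact le_abs_self _
    have h2 := mul_le_mul_of_nonneg_right (hz j) (abs_nonneg (a j - β j))
    linarith
  have h1 : ∑ j ∈ suppJ β, (2 * (z j * (a j - β j)) + 2 * (w j * |β j| - w j * |a j|))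
      ≤ 3 * ∑ j ∈ suppJ β, w j * |(a - β) j| := by
    rw [Finset.mul_sum]
    refine Finset.sum_le_sum fun j _ => ?_
    have h3 : |β j| - |a j| ≤ |a j - β j| := by
      rw [abs_sub_comm]
      exact abs_sub_abs_le_abs_sub _ _
    have h4 := mul_le_mul_of_nonneg_left h3 (hw j).le
    have h5 := hnoise j
    simp only [Pi.sub_apply]
    linarith
  have h2 : ∑ j ∈ (suppJ β)ᶜ, (2 * (z j * (a j - β j)) + 2 * (w j * |β j| - w j * |a j|))
      ≤ -∑ j ∈ (suppJ β)ᶜ, w j * |(a - β) j| := by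
    rw [← Finset.sum_neg_distrib]
    refine Finset.sum_le_sum fun j hj => ?_
    have h3 : β j = 0 := by simpa [suppJ] using hj
    have h5 := hnoise j
    simp only [Pi.sub_apply, h3, sub_zero, abs_zero] at h5 ⊢
    linarith
  linarith

/-- First-order consequence of `0 ≤ t A + t² q` for small positive `t`. -/
lemma nonneg_of_forall_quad {A q : ℝ} (hq : 0 ≤ q)
    (h : ∀ t : ℝ, 0 < t → t ≤ 1 → 0 ≤ t * A + t ^ 2 * q) : 0 ≤ A := by
  by_contra! hA
  have hden : 0 < q - A + 1 := by linarith
  have ht0 : 0 < -A / (q - A + 1) := div_pos (by linarith) hden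
  have h1 := h _ ht0 ((div_le_one hden).2 (by linarith))
  have h2 : 0 ≤ A + -A / (q - A + 1) * q := by
    refine nonneg_of_mul_nonneg_right (a := -A / (q - A + 1)) ?_ ht0
    linarith [h1]
  have h3 : A + -A / (q - A + 1) * q = A * (1 - A) / (q - A + 1) := by
    field_simp
    ring
  rw [h3] at h2
  have h4 : A * (1 - A) / (q - A + 1) < 0 :=
    div_neg_of_neg_of_pos (mul_neg_of_neg_of_pos hA (by linarith)) hden
  linarith

/-! ### The oracle inequality -/

/-- **Corollary 1, deterministic core.**
On the event where `2 |(Zₙ)ⱼ| ≤ ŵⱼ` for all `j`, if `β̂` minimizes `Rₙ(b) + 2 pen(b)`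
over a convex set `B` and the restricted eigenvalue condition RE(s,3) holds with
constant `κ > 0`, then for every `β ∈ B` with at most `s` nonzero coordinates,
`‖h_{β̂} − h₀‖ₙ² ≤ ‖h_β − h₀‖ₙ² + (9/(4κ²)) ∑_{j ∈ J(β)} ŵⱼ²`. -/
theorem fast_oracle_inequality_RE
    {n M d : ℕ} (hn : 1 ≤ n) (hM : 1 ≤ M) (hd1 : 1 ≤ d)
    (X : Fin n → (Fin d → ℝ)) (Y : Fin n → ℝ → ℝ)
    (hYmeas : ∀ i, Measurable (Y i))
    (hYrange : ∀ i t, Y i t ∈ Set.Icc (0:ℝ) 1)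
    (hYpos : ∀ t ∈ Set.Icc (0:ℝ) 1, 0 < ∑ i, Y i t)
    (N : Fin n → Measure ℝ) (hN : ∀ i, IsFiniteMeasure (N i))
    (hdic : Fin M → (Fin d → ℝ) → ℝ)
    (lam0 : ℝ → ℝ) (hlam_int : IntervalIntegrable lam0 volume 0 1)
    (hlam_nonneg : ∀ t, 0 ≤ lam0 t)
    (h0 : (Fin d → ℝ) → ℝ) (hh0 : ∀ x, 0 ≤ h0 x)
    (w : Fin M → ℝ) (hw : ∀ j, 0 < w j)
    (hnoise : ∀ j, 2 * |noiseZ X Y N hdic lam0 h0 j| ≤ w j)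
    (B : Set (Fin M → ℝ)) (hBconv : Convex ℝ B)
    (βhat : Fin M → ℝ) (hβhatB : βhat ∈ B)
    (hmin : ∀ b ∈ B,
      riskRn X Y N hdic βhat + 2 * penW w βhat ≤ riskRn X Y N hdic b + 2 * penW w b)
    (s : ℕ) (hs1 : 1 ≤ s) (hsM : s ≤ M)
    (κ : ℝ) (hκ : 0 < κ)
    (hRE : ∀ J : Finset (Fin M), J.card ≤ s → ∀ b : Fin M → ℝ, b ≠ 0 →
      penW w (restr Jᶜ b) ≤ 3 * penW w (restr J b) →
      κ * Real.sqrt (∑ j ∈ J, (b j) ^ 2) ≤ Real.sqrt (empNormSq X Y (hlin hdic b))) :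
    ∀ β ∈ B, (suppJ β).card ≤ s →
      empNormSq X Y (fun x => hlin hdic βhat x - h0 x) ≤
        empNormSq X Y (fun x => hlin hdic β x - h0 x) +
          (9 / (4 * κ ^ 2)) * ∑ j ∈ suppJ β, (w j) ^ 2 := by
  intro β hβ hcard
  set Δ : Fin M → ℝ := βhat - β with hΔ
  set z := noiseZ X Y N hdic lam0 h0 with hz
  set u : (Fin d → ℝ) → ℝ := fun x => hlin hdic βhat x - h0 x with hu
  have hq := empNormSq_nonneg (X := X) hYrange (hlin hdic Δ)
  set q := empNormSq X Y (hlin hdic Δ) with hqdef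
  have hrisk := riskRn_eq (X := X) hn hYmeas hYrange hYpos N hN hdic lam0 hlam_int h0
  rw [← hz] at hrisk
  -- squared distance to `h₀` along the segment from `βhat` to `β`
  have hexp : ∀ t : ℝ,
      empNormSq X Y (fun x => hlin hdic ((1 - t) • βhat + t • β) x - h0 x)
        = empNormSq X Y u + 2 * (-t) * empInner X Y u (hlin hdic Δ) + t ^ 2 * q := by
    intro t
    have h1 := empNormSq_add_smul (X := X) hYmeas hYrange (-t) u (hlin hdic Δ)
    rw [neg_sq] at h1
    rw [← h1]
    congr 1
    funext x
    have h2 : hlin hdic ((1 - t) • βhat + t • β) x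
        = hlin hdic βhat x + -t * hlin hdic Δ x := by
      simp only [hlin, Finset.mul_sum, ← Finset.sum_add_distrib]
      refine Finset.sum_congr rfl fun j _ => ?_
      simp only [hΔ, Pi.add_apply, Pi.smul_apply, Pi.sub_apply, smul_eq_mul]
      ring
    rw [h2, hu]
    ring
  have hβexp := hexp 1
  simp only [sub_self, zero_smul, one_smul, zero_add] at hβexp
  have hzlin : ∀ t : ℝ, ∑ j, z j * ((1 - t) • βhat + t • β) j
      = ∑ j, z j * βhat j - t * ∑ j, z j * Δ j := by
    intro t
    rw [Finset.mul_sum, ← Finset.sum_sub_distrib]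
    refine Finset.sum_congr rfl fun j _ => ?_
    simp only [hΔ, Pi.add_apply, Pi.smul_apply, Pi.sub_apply, smul_eq_mul]
    ring
  have hfirst : 0 ≤ -2 * empInner X Y u (hlin hdic Δ) + 2 * ∑ j, z j * Δ j
      + 2 * (penW w β - penW w βhat) := by
    refine nonneg_of_forall_quad hq fun t ht0 ht1 => ?_
    have hmem : (1 - t) • βhat + t • β ∈ B :=
      hBconv hβhatB hβ (sub_nonneg.2 ht1) ht0.le (by ring)
    have h1 := hmin _ hmem
    rw [hrisk, hrisk, hexp, hzlin] at h1
    have h2 := penW_segment_le w hw βhat β t ht0.le ht1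
    linarith
  have hcone := noise_pen_le w z hw hnoise βhat β
  have hΔsum : ∑ j, z j * (βhat j - β j) = ∑ j, z j * Δ j := rfl
  rw [hΔsum, ← hΔ] at hcone
  have hmain : empNormSq X Y u + q ≤ empNormSq X Y (fun x => hlin hdic β x - h0 x)
      + 3 * penW w (restr (suppJ β) Δ) - penW w (restr (suppJ β)ᶜ Δ) := by
    linarith
  have hpen0 : 0 ≤ penW w (restr (suppJ β)ᶜ Δ) :=
    Finset.sum_nonneg fun j _ => mul_nonneg (hw j).le (abs_nonneg _)
  have hW0 : 0 ≤ ∑ j ∈ suppJ β, (w j) ^ 2 := Finset.sum_nonneg fun j _ => sq_nonneg _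
  have hbound : 0 ≤ (9 / (4 * κ ^ 2)) * ∑ j ∈ suppJ β, (w j) ^ 2 := by positivity
  by_cases hc : penW w (restr (suppJ β)ᶜ Δ) ≤ 3 * penW w (restr (suppJ β) Δ)
  swap
  · push Not at hc
    linarith
  by_cases hΔ0 : Δ = 0
  · have h1 : βhat = β := sub_eq_zero.1 hΔ0
    rw [hu, h1]
    linarith
  have hre := hRE (suppJ β) hcard Δ hΔ0 hc
  rw [← hqdef] at hre
  have hCS : penW w (restr (suppJ β) Δ)
      ≤ √(∑ j ∈ suppJ β, (w j) ^ 2) * √(∑ j ∈ suppJ β, (Δ j) ^ 2) := by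
    rw [penW_restr]
    simpa only [sq_abs] using Real.sum_mul_le_sqrt_mul_sqrt (suppJ β) w fun j => |Δ j|
  set W := √(∑ j ∈ suppJ β, (w j) ^ 2) with hWdef
  have hWsq : W ^ 2 = ∑ j ∈ suppJ β, (w j) ^ 2 := Real.sq_sqrt hW0
  have hqsq : √q ^ 2 = q := Real.sq_sqrt hq
  have hl2 : √(∑ j ∈ suppJ β, (Δ j) ^ 2) ≤ √q / κ := by
    rw [le_div_iff₀ hκ]
    linarith
  have h1 : penW w (restr (suppJ β) Δ) ≤ W * (√q / κ) :=
    hCS.trans (mul_le_mul_of_nonneg_left hl2 (Real.sqrt_nonneg _))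
  have h2 : 3 * (W * (√q / κ)) ≤ q + 9 / (4 * κ ^ 2) * W ^ 2 := by
    have h3 := sq_nonneg (√q - 3 / (2 * κ) * W)
    have h4 : (√q - 3 / (2 * κ) * W) ^ 2
        = √q ^ 2 + 9 / (4 * κ ^ 2) * W ^ 2 - 3 * (W * (√q / κ)) := by
      field_simp
      ring
    rw [h4, hqsq] at h3
    linarith
  rw [← hWsq]
  linarith
end

section
/- Let h : ℝ^d → [0,∞). Then L_{n,2}(h) = ‖h − h_0‖_n² − ‖h_0‖_n² − (2/n) Σ_{i=1}^n [∫_0^1 (h(X_i) − h̄_Y(t)) dN^i(t) − ∫_0^1 (h(X_i) − h̄_Y(t))(λ_0(t) + h_0(X_i)) Y^i_t dt], where L_{n,2}(h) = (1/n) Σ_i ∫_0^1 (h(X_i) − h̄_Y(t))² Y^i_t dt − (2/n) Σ_i ∫_0^1 (h(X_i) − h̄_Y(t)) dN^i(t). -/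
/-!
Write `Wᵢ(t) = h(Xᵢ) - h̄_Y(t)` and `W⁰ᵢ(t) = h₀(Xᵢ) - h̄₀_Y(t)`. Since `h ↦ h̄_Y` is linear,
expanding the square gives `‖h - h₀‖ₙ² - ‖h₀‖ₙ² = (1/n) ∑ᵢ ∫ (Wᵢ² - 2 Wᵢ W⁰ᵢ) Yᵢ`. The weighted
deviations satisfy `∑ᵢ Wᵢ(t) Yᵢ(t) = 0` (`sum_dev_mul_eq_zero`), so in `∑ᵢ Wᵢ W⁰ᵢ Yᵢ` the factor
`W⁰ᵢ` may be replaced by `λ₀ + h₀(Xᵢ)`: the two differ by a quantity independent of `i`. Integrating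
this pointwise identity yields `sum_integral_sq`. All the integrals involved exist because `h̄_Y` is
measurable and bounded, and `λ₀` is integrable.
-/

open MeasureTheory Finset

/-- The bound needs no positivity of `∑ᵢ Yᵢ(t)`: where that sum vanishes, `hbar` is `0`. -/
lemma abs_hbar_le {n d : ℕ} (X : Fin n → (Fin d → ℝ)) (Y : Fin n → ℝ → ℝ)
    (hY : ∀ i t, Y i t ∈ Set.Icc (0:ℝ) 1) (h : (Fin d → ℝ) → ℝ) (t : ℝ) :
    |hbar X Y h t| ≤ ∑ i, |h (X i)| := by
  have hS : 0 ≤ ∑ i, Y i t := Finset.sum_nonneg fun i _ => (hY i t).1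
  unfold hbar
  rw [abs_div, abs_of_nonneg hS]
  refine div_le_of_le_mul₀ hS (by positivity) ?_
  calc |∑ i, h (X i) * Y i t| ≤ ∑ i, |h (X i) * Y i t| := Finset.abs_sum_le_sum_abs _ _
    _ = ∑ i, |h (X i)| * Y i t := by
        refine Finset.sum_congr rfl fun i _ => ?_
        rw [abs_mul, abs_of_nonneg (hY i t).1]
    _ ≤ ∑ i, |h (X i)| * ∑ j, Y j t := by
        refine Finset.sum_le_sum fun i _ => mul_le_mul_of_nonneg_left ?_ (abs_nonneg _)
        exact Finset.single_le_sum (f := fun j => Y j t) (fun j _ => (hY j t).1)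
          (Finset.mem_univ i)
    _ = (∑ i, |h (X i)|) * ∑ j, Y j t := by rw [Finset.sum_mul]

lemma measurable_hbar {n d : ℕ} (X : Fin n → (Fin d → ℝ)) (Y : Fin n → ℝ → ℝ)
    (hY : ∀ i, Measurable (Y i)) (h : (Fin d → ℝ) → ℝ) : Measurable (hbar X Y h) := by
  unfold hbar
  fun_prop

lemma hbar_sub {n d : ℕ} (X : Fin n → (Fin d → ℝ)) (Y : Fin n → ℝ → ℝ)
    (g h : (Fin d → ℝ) → ℝ) (t : ℝ) :
    hbar X Y (fun x => g x - h x) t = hbar X Y g t - hbar X Y h t := by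
  simp only [hbar, sub_mul, Finset.sum_sub_distrib, sub_div]

lemma sum_dev_mul_eq_zero {n d : ℕ} (X : Fin n → (Fin d → ℝ)) (Y : Fin n → ℝ → ℝ)
    (h : (Fin d → ℝ) → ℝ) (t : ℝ) (ht : 0 < ∑ i, Y i t) :
    ∑ i, (h (X i) - hbar X Y h t) * Y i t = 0 := by
  simp only [sub_mul, Finset.sum_sub_distrib, ← Finset.mul_sum]
  rw [hbar, div_mul_cancel₀ _ ht.ne', sub_self]

/-- A measurable bounded function times an integrable one is integrable on `[0, 1]`. -/
lemma intervalIntegrable_bdd_mul {f g : ℝ → ℝ} (hg : IntervalIntegrable g volume 0 1)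
    (hf : Measurable f) {C : ℝ} (hC : ∀ t, |f t| ≤ C) :
    IntervalIntegrable (fun t => f t * g t) volume 0 1 := by
  rw [intervalIntegrable_iff] at hg ⊢
  exact hg.bdd_mul hf.aestronglyMeasurable (Filter.Eventually.of_forall hC)

lemma intervalIntegrable_sq_dev {n d : ℕ} (X : Fin n → (Fin d → ℝ)) (Y : Fin n → ℝ → ℝ)
    (hYmeas : ∀ i, Measurable (Y i)) (hYrange : ∀ i t, Y i t ∈ Set.Icc (0:ℝ) 1)
    (g : (Fin d → ℝ) → ℝ) (i : Fin n) :
    IntervalIntegrable (fun t => (g (X i) - hbar X Y g t) ^ 2 * Y i t) volume 0 1 := by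
  have hm := measurable_hbar X Y hYmeas g
  have hf : Measurable fun t => (g (X i) - hbar X Y g t) ^ 2 * Y i t := by
    have := hYmeas i
    fun_prop
  have hb := intervalIntegrable_bdd_mul (g := fun _ => (1:ℝ)) intervalIntegrable_const hf
    (C := (|g (X i)| + ∑ j, |g (X j)|) ^ 2 * 1) (by
      intro t
      rw [abs_mul, abs_of_nonneg (hYrange i t).1, abs_pow]
      refine mul_le_mul ?_ (hYrange i t).2 (hYrange i t).1 (by positivity)
      gcongr
      refine (abs_sub _ _).trans ?_
      gcongr
      exact abs_hbar_le X Y hYrange g t)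
  simpa only [mul_one] using hb

/-- The part of the identity that does not involve the measures `Nᵢ`, before normalisation
by `n`. -/
lemma sum_integral_sq {n d : ℕ} (X : Fin n → (Fin d → ℝ)) (Y : Fin n → ℝ → ℝ)
    (hYmeas : ∀ i, Measurable (Y i))
    (hYrange : ∀ i t, Y i t ∈ Set.Icc (0:ℝ) 1)
    (hYpos : ∀ t ∈ Set.Icc (0:ℝ) 1, 0 < ∑ i, Y i t)
    (lam0 : ℝ → ℝ) (hlam_int : IntervalIntegrable lam0 volume 0 1)
    (h0 h : (Fin d → ℝ) → ℝ) :
    ∑ i, ∫ t in (0:ℝ)..1, (h (X i) - hbar X Y h t) ^ 2 * Y i t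
      = ∑ i, (∫ t in (0:ℝ)..1,
            (h (X i) - h0 (X i) - hbar X Y (fun x => h x - h0 x) t) ^ 2 * Y i t)
        - ∑ i, (∫ t in (0:ℝ)..1, (h0 (X i) - hbar X Y h0 t) ^ 2 * Y i t)
        + 2 * ∑ i, ∫ t in (0:ℝ)..1,
            (h (X i) - hbar X Y h t) * (lam0 t + h0 (X i)) * Y i t := by
  have hsq := intervalIntegrable_sq_dev X Y hYmeas hYrange
  have hlin : ∀ i, IntervalIntegrable
      (fun t => (h (X i) - hbar X Y h t) * (lam0 t + h0 (X i)) * Y i t) volume 0 1 := by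
    intro i
    have hg : IntervalIntegrable (fun t => lam0 t + h0 (X i)) volume 0 1 :=
      hlam_int.add intervalIntegrable_const
    have hm := measurable_hbar X Y hYmeas h
    have hf : Measurable fun t => (h (X i) - hbar X Y h t) * Y i t := by
      have := hYmeas i
      fun_prop
    refine (intervalIntegrable_bdd_mul hg hf (C := (|h (X i)| + ∑ j, |h (X j)|) * 1) ?_).congr ?_
    · intro t
      rw [abs_mul, abs_of_nonneg (hYrange i t).1]
      refine mul_le_mul ((abs_sub _ _).trans ?_) (hYrange i t).2 (hYrange i t).1 (by positivity)
      gcongr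
      exact abs_hbar_le X Y hYrange h t
    · intro t _
      ring
  have hdiff := hsq (fun x => h x - h0 x)
  have hsum : ∀ {f : Fin n → ℝ → ℝ}, (∀ i, IntervalIntegrable (f i) volume 0 1) →
      IntervalIntegrable (fun t => ∑ i, f i t) volume 0 1 := by
    intro f hf
    simpa only [Finset.sum_fn] using IntervalIntegrable.sum Finset.univ fun i _ => hf i
  rw [← intervalIntegral.integral_finsetSum fun i _ => hsq h i,
    ← intervalIntegral.integral_finsetSum fun i _ => hdiff i,
    ← intervalIntegral.integral_finsetSum fun i _ => hsq h0 i,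
    ← intervalIntegral.integral_finsetSum fun i _ => hlin i,
    ← intervalIntegral.integral_const_mul,
    ← intervalIntegral.integral_sub (hsum hdiff) (hsum (hsq h0)),
    ← intervalIntegral.integral_add ((hsum hdiff).sub (hsum (hsq h0)))
      ((hsum hlin).const_mul 2)]
  refine intervalIntegral.integral_congr fun t ht => ?_
  rw [Set.uIcc_of_le zero_le_one] at ht
  have hz := sum_dev_mul_eq_zero X Y h t (hYpos t ht)
  simp only [hbar_sub]
  -- The two sides differ by `-2 (λ₀ + h̄₀_Y) ∑ᵢ Wᵢ Yᵢ`.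
  rw [← sub_eq_zero, ← mul_zero (-2 * (lam0 t + hbar X Y h0 t)), ← hz, Finset.mul_sum,
    Finset.mul_sum, ← Finset.sum_sub_distrib, ← Finset.sum_add_distrib,
    ← Finset.sum_sub_distrib]
  refine Finset.sum_congr rfl fun i _ => ?_
  ring

/-- **Equation (suited).** The partial least-squares criterion `L_{n,2}(h)` equals
`‖h − h₀‖ₙ² − ‖h₀‖ₙ²` minus twice the centered noise term. -/
theorem partial_least_squares_suited
    {n d : ℕ} (hn : 1 ≤ n) (hd1 : 1 ≤ d)
    (X : Fin n → (Fin d → ℝ)) (Y : Fin n → ℝ → ℝ)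
    (hYmeas : ∀ i, Measurable (Y i))
    (hYrange : ∀ i t, Y i t ∈ Set.Icc (0:ℝ) 1)
    (hYpos : ∀ t ∈ Set.Icc (0:ℝ) 1, 0 < ∑ i, Y i t)
    (N : Fin n → Measure ℝ) (hN : ∀ i, IsFiniteMeasure (N i))
    (lam0 : ℝ → ℝ) (hlam_int : IntervalIntegrable lam0 volume 0 1)
    (hlam_nonneg : ∀ t, 0 ≤ lam0 t)
    (h0 : (Fin d → ℝ) → ℝ) (hh0 : ∀ x, 0 ≤ h0 x)
    (h : (Fin d → ℝ) → ℝ) (hh : ∀ x, 0 ≤ h x) :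
    -- L_{n,2}(h)
    ((1 / (n : ℝ)) * ∑ i, ∫ t in (0:ℝ)..1, (h (X i) - hbar X Y h t) ^ 2 * Y i t
      - (2 / (n : ℝ)) * ∑ i, ∫ t in Set.Icc (0:ℝ) 1, (h (X i) - hbar X Y h t) ∂(N i))
    = empNormSq X Y (fun x => h x - h0 x) - empNormSq X Y h0
      - (2 / (n : ℝ)) * ∑ i,
          ((∫ t in Set.Icc (0:ℝ) 1, (h (X i) - hbar X Y h t) ∂(N i)) -
            ∫ t in (0:ℝ)..1, (h (X i) - hbar X Y h t) * (lam0 t + h0 (X i)) * Y i t) := by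
  have hsq := intervalIntegrable_sq_dev X Y hYmeas hYrange
  have key := sum_integral_sq X Y hYmeas hYrange hYpos lam0 hlam_int h0 h
  have hn0 : (n : ℝ) ≠ 0 := by positivity
  -- On the left-hand side the scope of `∫ t in 0..1` extends over the `Nᵢ` term, a constant `c`
  -- in `i` and `t`; as `(1/n) ∑ᵢ ∫₀¹ c = c`, it can be moved outside.
  generalize hc : (2 / (n : ℝ)) * ∑ i, ∫ t in Set.Icc (0:ℝ) 1, (h (X i) - hbar X Y h t) ∂(N i) = c
  simp only [intervalIntegral.integral_sub (hsq h _) intervalIntegrable_const,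
    Finset.sum_sub_distrib, key, empNormSq, empInner, ← pow_two, mul_sub, hc]
  simp
  field_simp
  ring
end
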